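/- arXiv:1712.03345 — 2 statements merged into one kernel-verified Lean document; each statement's English description precedes it below -/
import Mathlib

section
/- Let S be a homomorphism of the Thue–Morse language L_TM with values p = S(a), q = S(b) satisfying gcd(p, q) = 1. Then ℕ \ S(L_TM) has infinite cardinality if and only if p + q ≥ 6; moreover, if p + q < 6 then ℕ \ S(L_TM) has at most one element (it is either empty or a singleton). -/
/-- `w` is a nonempty finite factor of the infinite word `f`. -/
def IsFactor {A : Type*} (f : ℕ → A) (w : List A) : Prop :=
  w ≠ [] ∧ ∃ i : ℕ, w = (List.range w.length).map fun j => f (i + j)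

/-- The Thue–Morse morphism `a ↦ ab`, `b ↦ ba` (here `a = false`, `b = true`),
extended to words by concatenation. -/
def tmMorph (w : List Bool) : List Bool :=
  w.flatMap fun x => if x then [true, false] else [false, true]

/-- The Thue–Morse word: the fixed point beginning with `a` of the Thue–Morse
morphism (the `n`-th letter is read off from a sufficiently high iterate on `a`). -/
def tmWord (n : ℕ) : Bool :=
  (tmMorph^[n + 1] [false]).getD n false

/-- The Thue–Morse language: nonempty finite factors of the Thue–Morse word. -/
def tmLang : Set (List Bool) :=
  {w | IsFactor tmWord w}

/-- The homomorphism determined by `p = S(a)`, `q = S(b)`: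
`S(w) = N_a(w)·p + N_b(w)·q`. -/
def wordValTM (p q : ℕ) (w : List Bool) : ℕ :=
  w.count false * p + w.count true * q

/-!
The Thue–Morse word `t` satisfies `t (2n) = t n` and `t (2n + 1) = !t n`, so its prefixes of even
length contain as many `a` as `b`, and those of odd length one more of one letter. Hence the letter
counts `(x, y)` of a factor satisfy `|x - y| ≤ 2`. Conversely every such `(x, y) ≠ (0, 0)` occurs,
because at any distance `k > 0` all four pairs of letters `(t m, t (m + k))` occur.

So `S(L_TM)` consists of the values `x p + y q` with `x, y ≥ 0` not both zero and `|x - y| ≤ 2`, and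
`x p + y q ≡ (y - x) q` modulo `p + q` takes at most five residues. If `p + q ≥ 6`, some residue
class is missed entirely. If `p + q ≤ 5` and `q` is a unit modulo `p + q`, then every `n > 0` is
`x p + y q` with integers `|x - y| ≤ 2`; these are nonnegative unless `(x, y)` is `(-1, 1)` or
`(1, -1)`, that is, unless `n = |p - q|`.
-/

section Factors

variable {A : Type*}

lemma isFactor_iff {f : ℕ → A} {w : List A} :
    IsFactor f w ↔ ∃ i n : ℕ, 0 < n ∧ (List.range n).map (fun j => f (i + j)) = w := by
  constructor
  · rintro ⟨hw, i, hi⟩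
    exact ⟨i, w.length, List.length_pos_of_ne_nil hw, hi.symm⟩
  · rintro ⟨i, n, hn, rfl⟩
    exact ⟨by simpa using hn.ne', i, by simp⟩

lemma count_map_range [DecidableEq A] (f : ℕ → A) (a : A) (n : ℕ) :
    ((List.range n).map f).count a = Nat.count (fun j => f j = a) n := by
  simp only [List.count, List.countP_map, Nat.count]
  rfl

end Factors

section TMWord

lemma tmMorph_cons (b : Bool) (w : List Bool) : tmMorph (b :: w) = b :: (!b) :: tmMorph w := by
  cases b <;> rfl

lemma length_tmMorph (w : List Bool) : (tmMorph w).length = 2 * w.length := by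
  induction w with
  | nil => rfl
  | cons b w ih => simp only [tmMorph_cons, List.length_cons, ih]; ring

lemma getElem?_tmMorph_two_mul (w : List Bool) (n : ℕ) : (tmMorph w)[2 * n]? = w[n]? := by
  induction w generalizing n with
  | nil => rfl
  | cons b w ih =>
    cases n with
    | zero => simp [tmMorph_cons]
    | succ n => simp [tmMorph_cons, mul_add, ih]

lemma getElem?_tmMorph_two_mul_add_one (w : List Bool) (n : ℕ) :
    (tmMorph w)[2 * n + 1]? = w[n]?.map not := by
  induction w generalizing n with
  | nil => rfl
  | cons b w ih =>
    cases n with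
    | zero => simp [tmMorph_cons]
    | succ n => simp [tmMorph_cons, mul_add, ih]

lemma length_iterate_tmMorph_singleton (m : ℕ) (b : Bool) :
    (tmMorph^[m] [b]).length = 2 ^ m := by
  induction m with
  | zero => rfl
  | succ m ih => rw [Function.iterate_succ_apply', length_tmMorph, ih, pow_succ']

lemma iterate_tmMorph_prefix_succ (m : ℕ) :
    tmMorph^[m] [false] <+: tmMorph^[m + 1] [false] := by
  induction m with
  | zero => exact ⟨[true], rfl⟩
  | succ m ih =>
    rw [Function.iterate_succ_apply', Function.iterate_succ_apply' _ (m + 1)]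
    exact List.IsPrefix.flatMap ih _

lemma iterate_tmMorph_prefix {m k : ℕ} (hmk : m ≤ k) :
    tmMorph^[m] [false] <+: tmMorph^[k] [false] := by
  induction k, hmk using Nat.le_induction with
  | base => exact List.prefix_rfl
  | succ k _ ih => exact ih.trans (iterate_tmMorph_prefix_succ k)

lemma getElem?_iterate_tmMorph {m n : ℕ} (hn : n < 2 ^ m) :
    (tmMorph^[m] [false])[n]? = some (tmWord n) := by
  have agree {i j : ℕ} (hij : i ≤ j) (hi : n < 2 ^ i) :
      (tmMorph^[i] [false])[n]? = (tmMorph^[j] [false])[n]? := by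
    have hlen : n < (tmMorph^[i] [false]).length := by rwa [length_iterate_tmMorph_singleton]
    rw [List.getElem?_eq_getElem hlen,
      List.prefix_iff_getElem?.mp (iterate_tmMorph_prefix hij) n hlen]
  have hn' : n < 2 ^ (n + 1) := n.lt_succ_self.trans Nat.lt_two_pow_self
  have heq : (tmMorph^[m] [false])[n]? = (tmMorph^[n + 1] [false])[n]? := by
    rcases le_total m (n + 1) with h | h
    exacts [agree h hn, (agree h hn').symm]
  have hlen : n < (tmMorph^[n + 1] [false]).length := by
    rwa [length_iterate_tmMorph_singleton]
  rw [heq, tmWord, List.getD_eq_getElem _ _ hlen, List.getElem?_eq_getElem hlen]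

lemma tmWord_two_mul (n : ℕ) : tmWord (2 * n) = tmWord n := by
  have hn : n < 2 ^ n := Nat.lt_two_pow_self
  have h2n : 2 * n < 2 ^ (n + 1) := by omega
  rw [← Option.some_inj, ← getElem?_iterate_tmMorph h2n, Function.iterate_succ_apply',
    getElem?_tmMorph_two_mul, getElem?_iterate_tmMorph hn]

lemma tmWord_two_mul_add_one (n : ℕ) : tmWord (2 * n + 1) = !tmWord n := by
  have hn : n < 2 ^ n := Nat.lt_two_pow_self
  have h2n : 2 * n + 1 < 2 ^ (n + 1) := by omega
  rw [← Option.some_inj, ← getElem?_iterate_tmMorph h2n, Function.iterate_succ_apply',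
    getElem?_tmMorph_two_mul_add_one, getElem?_iterate_tmMorph hn, Option.map_some]

lemma exists_tmWord_eq_and_tmWord_add_eq {k : ℕ} (hk : 0 < k) (a b : Bool) :
    ∃ m, tmWord m = a ∧ tmWord (m + k) = b := by
  induction k using Nat.strong_induction_on generalizing a b with
  | _ k ih =>
    obtain ⟨j, rfl | rfl⟩ := Nat.even_or_odd' k
    · obtain ⟨m, ha, hb⟩ := ih j (by omega) (by omega) a b
      exact ⟨2 * m, by rw [tmWord_two_mul, ha], by rw [← mul_add, tmWord_two_mul, hb]⟩
    · obtain rfl | hj := j.eq_zero_or_pos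
      · -- `t` begins with `abbabaa`.
        cases a <;> cases b
        exacts [⟨5, rfl, rfl⟩, ⟨0, rfl, rfl⟩, ⟨2, rfl, rfl⟩, ⟨1, rfl, rfl⟩]
      · obtain ⟨m, ha, hb⟩ := ih j (by omega) hj a (!b)
        exact ⟨2 * m, by rw [tmWord_two_mul, ha],
          by rw [← add_assoc, ← mul_add, tmWord_two_mul_add_one, hb, Bool.not_not]⟩

end TMWord

section LetterCounts

/-- The number of letters `b` (encoded as `true`) in the prefix of length `n` of the Thue–Morse
word; the letter counts of a factor are differences of such numbers. -/
def tmPrefixCount (n : ℕ) : ℕ := Nat.count (fun k => tmWord k = true) n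

lemma tmPrefixCount_succ (n : ℕ) :
    tmPrefixCount (n + 1) = tmPrefixCount n + (tmWord n).toNat := by
  rw [tmPrefixCount, Nat.count_succ, tmPrefixCount]
  cases tmWord n <;> rfl

lemma tmPrefixCount_two_mul (n : ℕ) : tmPrefixCount (2 * n) = n := by
  induction n with
  | zero => rfl
  | succ n ih =>
    rw [mul_add_one, tmPrefixCount_succ (2 * n + 1), tmPrefixCount_succ, ih, tmWord_two_mul,
      tmWord_two_mul_add_one]
    cases tmWord n <;> rfl

lemma tmPrefixCount_two_mul_add_one (n : ℕ) :
    tmPrefixCount (2 * n + 1) = n + (tmWord n).toNat := by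
  rw [tmPrefixCount_succ, tmPrefixCount_two_mul, tmWord_two_mul]

lemma abs_two_mul_tmPrefixCount_sub_le (n : ℕ) : |2 * (tmPrefixCount n : ℤ) - n| ≤ 1 := by
  obtain ⟨m, rfl | rfl⟩ := Nat.even_or_odd' n
  · rw [tmPrefixCount_two_mul]; simp
  · have := (tmWord m).toNat_le
    rw [tmPrefixCount_two_mul_add_one, abs_le]
    omega

lemma exists_tmPrefixCount_add_odd (k : ℕ) (b : Bool) :
    ∃ i, tmPrefixCount (i + (2 * k + 1)) = tmPrefixCount i + (k + b.toNat) := by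
  obtain ⟨m, -, hm⟩ := exists_tmWord_eq_and_tmWord_add_eq k.succ_pos true b
  refine ⟨2 * (m + 1), ?_⟩
  rw [show 2 * (m + 1) + (2 * k + 1) = 2 * (m + (k + 1)) + 1 by ring,
    tmPrefixCount_two_mul_add_one, tmPrefixCount_two_mul, hm]
  ring

lemma exists_tmPrefixCount_add_even {k : ℕ} (hk : 0 < k) (a b : Bool) :
    ∃ i, tmPrefixCount (i + 2 * k) + a.toNat = tmPrefixCount i + (k + b.toNat) := by
  obtain ⟨m, ha, hb⟩ := exists_tmWord_eq_and_tmWord_add_eq hk a b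
  refine ⟨2 * m + 1, ?_⟩
  rw [show 2 * m + 1 + 2 * k = 2 * (m + k) + 1 by ring, tmPrefixCount_two_mul_add_one,
    tmPrefixCount_two_mul_add_one, ha, hb]
  ring

lemma exists_tmPrefixCount_add_iff {x y : ℕ} (hpos : 0 < x + y) :
    (∃ i, tmPrefixCount (i + (x + y)) = tmPrefixCount i + y) ↔ |(x : ℤ) - y| ≤ 2 := by
  constructor
  · rintro ⟨i, hi⟩
    have hstart := abs_le.mp (abs_two_mul_tmPrefixCount_sub_le i)
    have hend := abs_le.mp (abs_two_mul_tmPrefixCount_sub_le (i + (x + y)))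
    rw [abs_le]
    omega
  · intro hxy
    rw [abs_le] at hxy
    obtain ⟨k, hk | hk⟩ := Nat.even_or_odd' (x + y) <;> rw [hk]
    · obtain ⟨a, b, hab⟩ : ∃ a b : Bool, y + a.toNat = k + b.toNat := by
        obtain h | h | h : y + 1 = k ∨ y = k ∨ y = k + 1 := by omega
        exacts [⟨true, false, h⟩, ⟨false, false, h⟩, ⟨false, true, h⟩]
      obtain ⟨i, hi⟩ := exists_tmPrefixCount_add_even (k := k) (by omega) a b
      exact ⟨i, by omega⟩
    · obtain ⟨b, rfl⟩ : ∃ b : Bool, y = k + b.toNat := by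
        obtain h | h : y = k ∨ y = k + 1 := by omega
        exacts [⟨false, h⟩, ⟨true, h⟩]
      exact exists_tmPrefixCount_add_odd k b

lemma exists_mem_tmLang_count_iff_tmPrefixCount {x y : ℕ} :
    (∃ w ∈ tmLang, w.count false = x ∧ w.count true = y) ↔
      0 < x + y ∧ ∃ i, tmPrefixCount (i + (x + y)) = tmPrefixCount i + y := by
  have count_true (i n : ℕ) : tmPrefixCount (i + n) =
      tmPrefixCount i + ((List.range n).map fun j => tmWord (i + j)).count true := by
    rw [count_map_range, tmPrefixCount, Nat.count_add, tmPrefixCount]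
  have count_add (i n : ℕ) : ((List.range n).map fun j => tmWord (i + j)).count false +
      ((List.range n).map fun j => tmWord (i + j)).count true = n := by
    rw [List.count_false_add_count_true, List.length_map, List.length_range]
  constructor
  · rintro ⟨w, hw, rfl, rfl⟩
    obtain ⟨i, n, hn, rfl⟩ := isFactor_iff.mp hw
    rw [count_add]
    exact ⟨hn, i, count_true i n⟩
  · rintro ⟨hpos, i, hi⟩
    refine ⟨_, isFactor_iff.mpr ⟨i, x + y, hpos, rfl⟩, ?_⟩
    have := count_true i (x + y)
    have := count_add i (x + y)
    omega

theorem exists_mem_tmLang_count_iff {x y : ℕ} :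
    (∃ w ∈ tmLang, w.count false = x ∧ w.count true = y) ↔ 0 < x + y ∧ |(x : ℤ) - y| ≤ 2 := by
  rw [exists_mem_tmLang_count_iff_tmPrefixCount]
  exact and_congr_right exists_tmPrefixCount_add_iff

end LetterCounts

section Values

variable {p q n : ℕ}

lemma mem_image_wordValTM_iff (hn : 0 < n) :
    n ∈ wordValTM p q '' tmLang ↔ ∃ x y : ℕ, |(x : ℤ) - y| ≤ 2 ∧ n = x * p + y * q := by
  constructor
  · rintro ⟨w, hw, rfl⟩
    exact ⟨_, _, (exists_mem_tmLang_count_iff.mp ⟨w, hw, rfl, rfl⟩).2, rfl⟩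
  · rintro ⟨x, y, hxy, rfl⟩
    have hpos : 0 < x + y := by
      by_contra! h
      obtain ⟨rfl, rfl⟩ : x = 0 ∧ y = 0 := by omega
      simp at hn
    obtain ⟨w, hw, rfl, rfl⟩ := exists_mem_tmLang_count_iff.mpr ⟨hpos, hxy⟩
    exact ⟨w, hw, rfl⟩

lemma nonneg_left_of_abs_sub_le_two {x y : ℤ} (hxy : |x - y| ≤ 2) (hpos : 0 < x * p + y * q)
    (hne : x * p + y * q ≠ |(p : ℤ) - q|) : 0 ≤ x := by
  by_contra! hx
  rw [abs_le] at hxy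
  have hy : 0 < y := by
    by_contra! hy
    have := mul_nonpos_of_nonpos_of_nonneg hx.le (Int.natCast_nonneg p)
    have := mul_nonpos_of_nonpos_of_nonneg hy (Int.natCast_nonneg q)
    omega
  obtain ⟨rfl, rfl⟩ : x = -1 ∧ y = 1 := by omega
  rw [abs_sub_comm, abs_of_pos (by linarith)] at hne
  exact hne (by ring)

lemma mem_image_wordValTM_iff_int (hn : 0 < n) (hne : (n : ℤ) ≠ |(p : ℤ) - q|) :
    n ∈ wordValTM p q '' tmLang ↔ ∃ x y : ℤ, |x - y| ≤ 2 ∧ (n : ℤ) = x * p + y * q := by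
  rw [mem_image_wordValTM_iff hn]
  constructor
  · rintro ⟨x, y, hxy, rfl⟩
    exact ⟨x, y, hxy, by push_cast; rfl⟩
  · rintro ⟨x, y, hxy, h⟩
    have hpos : 0 < x * p + y * q := by omega
    have hx : 0 ≤ x := nonneg_left_of_abs_sub_le_two hxy hpos (h ▸ hne)
    have hy : 0 ≤ y := by
      refine nonneg_left_of_abs_sub_le_two (p := q) (q := p) (abs_sub_comm x y ▸ hxy) ?_ ?_
      · rwa [add_comm]
      · rwa [add_comm, abs_sub_comm, ← h]
    lift x to ℕ using hx
    lift y to ℕ using hy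
    exact ⟨x, y, hxy, by exact_mod_cast h⟩

/-- The residues modulo `p + q` of the values `x p + y q` with `|x - y| ≤ 2`: since `p ≡ -q`, the
residue of `x p + y q` is that of `(y - x) q`. -/
noncomputable def tmResidues (p q : ℕ) : Finset (ZMod (p + q)) :=
  (Finset.Icc (-2 : ℤ) 2).image fun d => ((d * q : ℤ) : ZMod (p + q))

lemma card_tmResidues_le (p q : ℕ) : (tmResidues p q).card ≤ 5 := Finset.card_image_le

lemma intCast_mem_tmResidues_iff (n : ℤ) :
    (n : ZMod (p + q)) ∈ tmResidues p q ↔ ∃ x y : ℤ, |x - y| ≤ 2 ∧ n = x * p + y * q := by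
  simp only [tmResidues, Finset.mem_image, Finset.mem_Icc, ← abs_le]
  constructor
  · rintro ⟨d, hd, h⟩
    have hdvd : ((p + q : ℕ) : ℤ) ∣ n - d * q := by
      rw [← ZMod.intCast_eq_intCast_iff_dvd_sub]
      exact h
    obtain ⟨x, hx⟩ := hdvd
    refine ⟨x, x + d, by simpa using hd, ?_⟩
    push_cast at hx
    linear_combination hx
  · rintro ⟨x, y, hxy, rfl⟩
    have hpq : (p + q : ZMod (p + q)) = 0 := mod_cast ZMod.natCast_self (p + q)
    refine ⟨y - x, by rwa [abs_sub_comm], ?_⟩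
    push_cast
    linear_combination -(x : ZMod (p + q)) * hpq

theorem mem_image_wordValTM_iff_residue (hn : 0 < n) (hne : (n : ℤ) ≠ |(p : ℤ) - q|) :
    n ∈ wordValTM p q '' tmLang ↔ (n : ZMod (p + q)) ∈ tmResidues p q := by
  rw [mem_image_wordValTM_iff_int hn hne, ← intCast_mem_tmResidues_iff, Int.cast_natCast]

end Values

section Complement

variable {p q : ℕ}

lemma infinite_setOf_natCast_eq {s : ℕ} [NeZero s] (r : ZMod s) :
    {n : ℕ | (n : ZMod s) = r}.Infinite := by
  refine Set.infinite_of_forall_exists_gt fun N => ⟨r.val + s * (N + 1), ?_, ?_⟩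
  · simp
  · have := Nat.le_mul_of_pos_left (N + 1) (NeZero.pos s)
    omega

theorem infinite_Ioi_sdiff_image_wordValTM (h : 6 ≤ p + q) :
    (Set.Ioi 0 \ wordValTM p q '' tmLang).Infinite := by
  have : NeZero (p + q) := ⟨by omega⟩
  obtain ⟨r, hr⟩ : ∃ r, r ∉ tmResidues p q := by
    have hcard : (tmResidues p q).card < Fintype.card (ZMod (p + q)) := by
      rw [ZMod.card]
      exact (card_tmResidues_le p q).trans_lt h
    simpa using Finset.exists_mem_notMem_of_card_lt_card (t := Finset.univ) hcard
  refine ((infinite_setOf_natCast_eq r).sdiff (Set.toFinite {0, (|(p : ℤ) - q|).natAbs})).mono ?_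
  rintro n ⟨hnr : (n : ZMod (p + q)) = r, hn⟩
  simp only [Set.mem_insert_iff, Set.mem_singleton_iff, not_or] at hn
  have hpos : 0 < n := Nat.pos_of_ne_zero hn.1
  refine ⟨hpos, fun hmem => hr ?_⟩
  rwa [mem_image_wordValTM_iff_residue hpos (by omega), hnr] at hmem

lemma mem_tmResidues_of_coprime (hgcd : p.Coprime q) (h : p + q < 6) (r : ZMod (p + q)) :
    r ∈ tmResidues p q := by
  have : NeZero (p + q) := ⟨fun h0 => by
    obtain ⟨rfl, rfl⟩ := Nat.add_eq_zero_iff.mp h0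
    simp at hgcd⟩
  have hunit : IsUnit (q : ZMod (p + q)) := by
    rw [ZMod.isUnit_iff_coprime]
    simpa using hgcd.symm
  obtain ⟨c, rfl⟩ : (q : ZMod (p + q)) ∣ r := hunit.dvd
  have hc := c.natAbs_valMinAbs_le
  refine Finset.mem_image.mpr ⟨c.valMinAbs, ?_, by simp [mul_comm]⟩
  rw [Finset.mem_Icc]
  omega

theorem Ioi_sdiff_image_wordValTM_subset (hgcd : p.Coprime q) (h : p + q < 6) :
    (Set.Ioi 0 \ wordValTM p q '' tmLang) ⊆ {(|(p : ℤ) - q|).natAbs} := by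
  rintro n ⟨hpos, hmem⟩
  by_contra hne
  refine hmem ((mem_image_wordValTM_iff_residue hpos ?_).mpr (mem_tmResidues_of_coprime hgcd h _))
  rw [Set.mem_singleton_iff] at hne
  omega

end Complement

theorem tm_complement_cardinality (p q : ℕ) (hp : 0 < p) (hq : 0 < q)
    (hgcd : Nat.gcd p q = 1) :
    ({n : ℕ | 0 < n ∧ n ∉ {m : ℕ | ∃ w ∈ tmLang, wordValTM p q w = m}}.Infinite ↔
      6 ≤ p + q) ∧
    (p + q < 6 →
      {n : ℕ | 0 < n ∧ n ∉ {m : ℕ | ∃ w ∈ tmLang, wordValTM p q w = m}}.Subsingleton) := by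
  have hsub (h : p + q < 6) : (Set.Ioi 0 \ wordValTM p q '' tmLang).Subsingleton :=
    Set.subsingleton_singleton.anti (Ioi_sdiff_image_wordValTM_subset hgcd h)
  refine ⟨⟨fun hinf => ?_, infinite_Ioi_sdiff_image_wordValTM⟩, hsub⟩
  by_contra! h
  exact hinf (hsub h).finite
end

section
/- Let θ be the morphism on the alphabet {a,b,c,d} given by θ(a) = abcba, θ(b) = bcdcb, θ(c) = cdadc, θ(d) = dabad, let x = θ^∞(a) be its fixed point beginning with a, and let L_θ be the set of nonempty finite factors of x. Let S⊕ be the homomorphism into ℤ × ℤ determined by S⊕(a) = (1,0), S⊕(b) = (0,1), S⊕(c) = (−1,0), S⊕(d) = (0,−1), i.e., S⊕(w) = N_a(w)·(1,0) + N_b(w)·(0,1) + N_c(w)·(−1,0) + N_d(w)·(0,−1). Then S⊕(L_θ) = ℤ × ℤ: every pair of integers is the image of some word in L_θ. -/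
/-- The perfect symmetric 5-folding morphism on `{a,b,c,d}` (here `a = 0`, `b = 1`,
`c = 2`, `d = 3`): `θ(a) = abcba`, `θ(b) = bcdcb`, `θ(c) = cdadc`, `θ(d) = dabad`,
on single letters. -/
def pf5Sub (x : Fin 4) : List (Fin 4) :=
  if x = 0 then [0, 1, 2, 1, 0]
  else if x = 1 then [1, 2, 3, 2, 1]
  else if x = 2 then [2, 3, 0, 3, 2]
  else [3, 0, 1, 0, 3]

/-- The morphism `θ` extended to words by concatenation. -/
def pf5Morph (w : List (Fin 4)) : List (Fin 4) :=
  w.flatMap pf5Sub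

/-- The fixed point `x = θ^∞(a)` beginning with `a` (the `n`-th letter is read off
from a sufficiently high iterate on `a`). -/
def pf5Word (n : ℕ) : Fin 4 :=
  (pf5Morph^[n + 1] [0]).getD n 0

/-- The language generated by `θ`: nonempty finite factors of `x = θ^∞(a)`. -/
def pf5Lang : Set (List (Fin 4)) :=
  {w | IsFactor pf5Word w}

/-- The homomorphism `S⊕` into `ℤ × ℤ` with `S⊕(a) = (1,0)`, `S⊕(b) = (0,1)`,
`S⊕(c) = (−1,0)`, `S⊕(d) = (0,−1)`. -/
def Splus (w : List (Fin 4)) : ℤ × ℤ :=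
  ((w.count 0 : ℤ) - (w.count 2 : ℤ), (w.count 1 : ℤ) - (w.count 3 : ℤ))

/-!
Identify `ℤ × ℤ` with the Gaussian integers, so that the letters become the units `1, i, -1, -i`
and `x` becomes a lattice path. Applying `θ` multiplies the path by `1 + 2i` and replaces
each unit edge by five unit edges. Parity decides which directed edges the path may use, and every
such edge is one of the five edges replacing another such edge, its parent. Passing to the parent
brings the midpoint of an edge closer to the origin, until it is one of the four edges at the
origin. Starting from a suitable occurrence of `a`, each of these four is traversed at the
beginning of the path, so every admissible edge is traversed from some occurrence of `a`.
-/

section UniformMorphism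

variable {A B : Type*} {k : ℕ}

theorem length_flatMap_of_uniform {σ : A → List B} (hσ : ∀ c, (σ c).length = k) (w : List A) :
    (w.flatMap σ).length = k * w.length := by
  simp [List.length_flatMap, hσ, mul_comm]

theorem getElem?_flatMap_of_uniform {σ : A → List B} (hσ : ∀ c, (σ c).length = k) (w : List A)
    (p : ℕ) {j : ℕ} (hj : j < k) :
    (w.flatMap σ)[k * p + j]? = w[p]?.bind fun c => (σ c)[j]? := by
  induction w generalizing p with
  | nil => simp
  | cons c w ih =>
    rw [List.flatMap_cons]
    cases p with
    | zero => simp [List.getElem?_append_left, hσ, hj]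
    | succ p =>
      have hshift : k * (p + 1) + j - k = k * p + j := by rw [mul_add_one]; omega
      rw [List.getElem?_append_right (by rw [hσ, mul_add_one]; omega), hσ, hshift, ih,
        List.getElem?_cons_succ]

theorem length_iterate_flatMap_of_uniform {σ : A → List A} (hσ : ∀ c, (σ c).length = k) (a : A)
    (n : ℕ) : ((List.flatMap σ)^[n] [a]).length = k ^ n := by
  induction n with
  | zero => rfl
  | succ n ih => rw [Function.iterate_succ_apply', length_flatMap_of_uniform hσ, ih, pow_succ']

theorem iterate_flatMap_prefix {σ : A → List A} {a : A} (ha : [a] <+: σ a) {m n : ℕ}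
    (hmn : m ≤ n) : (List.flatMap σ)^[m] [a] <+: (List.flatMap σ)^[n] [a] := by
  have hsucc (n : ℕ) : (List.flatMap σ)^[n] [a] <+: (List.flatMap σ)^[n + 1] [a] := by
    induction n with
    | zero => simpa using ha
    | succ n ih => simpa only [Function.iterate_succ_apply'] using ih.flatMap σ
  induction n, hmn using Nat.le_induction with
  | base => exact List.prefix_rfl
  | succ n _ ih => exact ih.trans (hsucc n)

end UniformMorphism

theorem isFactor_map_range {A : Type*} (f : ℕ → A) (i : ℕ) {n : ℕ} (hn : n ≠ 0) :
    IsFactor f ((List.range n).map fun j => f (i + j)) :=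
  ⟨by simpa using hn, i, by simp⟩

theorem length_pf5Sub (c : Fin 4) : (pf5Sub c).length = 5 := by
  decide +revert

theorem getElem?_pf5Morph_iterate {n i : ℕ} (hi : i < 5 ^ n) :
    (pf5Morph^[n] [0])[i]? = some (pf5Word i) := by
  have getElem?_eq {m N : ℕ} (hm : i < 5 ^ m) (hmN : m ≤ N) :
      (pf5Morph^[N] [0])[i]? = (pf5Morph^[m] [0])[i]? := by
    have hlt : i < (pf5Morph^[m] [0]).length :=
      hm.trans_eq (length_iterate_flatMap_of_uniform length_pf5Sub 0 m).symm
    have hprefix : pf5Morph^[m] [0] <+: pf5Morph^[N] [0] :=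
      iterate_flatMap_prefix (by decide) hmN
    rw [List.prefix_iff_getElem?.1 hprefix i hlt, List.getElem?_eq_getElem hlt]
  have hi' : i < 5 ^ (i + 1) := i.lt_succ_self.trans (Nat.lt_pow_self (by norm_num))
  have hlt : i < (pf5Morph^[i + 1] [0]).length :=
    hi'.trans_eq (length_iterate_flatMap_of_uniform length_pf5Sub 0 (i + 1)).symm
  rw [← getElem?_eq hi (le_max_left n (i + 1)), getElem?_eq hi' (le_max_right n (i + 1)),
    pf5Word, List.getD_eq_getElem _ _ hlt, List.getElem?_eq_getElem hlt]

-- With letters read modulo 4, `θ(c)` is `θ(a)` with `c` added to every letter.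
theorem getElem?_pf5Sub (c : Fin 4) {j : ℕ} (hj : j < 5) :
    (pf5Sub c)[j]? = some (c + pf5Word j) := by
  decide +revert

theorem pf5Word_five_mul_add (p : ℕ) {j : ℕ} (hj : j < 5) :
    pf5Word (5 * p + j) = pf5Word p + pf5Word j := by
  have hp : p < 5 ^ p := Nat.lt_pow_self (by norm_num)
  have hpj : 5 * p + j < 5 ^ (p + 1) := by rw [pow_succ]; omega
  apply Option.some_injective
  rw [← getElem?_pf5Morph_iterate hpj, Function.iterate_succ_apply', pf5Morph,
    getElem?_flatMap_of_uniform length_pf5Sub _ _ hj, getElem?_pf5Morph_iterate hp,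
    Option.bind_some, getElem?_pf5Sub _ hj]

/-- The letters `a, b, c, d` as the directions `1, i, -1, -i`, which is `S⊕` on letters after
identifying `ℤ × ℤ` with the Gaussian integers. -/
def pf5Dir : Fin 4 → GaussianInt :=
  ![1, ⟨0, 1⟩, -1, ⟨0, -1⟩]

theorem pf5Dir_add (c e : Fin 4) : pf5Dir (c + e) = pf5Dir c * pf5Dir e := by
  decide +revert

theorem norm_pf5Dir (c : Fin 4) : (pf5Dir c).norm = 1 := by
  decide +revert

theorem sum_map_pf5Dir (w : List (Fin 4)) :
    (w.map pf5Dir).sum = ⟨(Splus w).1, (Splus w).2⟩ := by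
  induction w with
  | nil => rfl
  | cons c w ih =>
    have hletter : pf5Dir c = ⟨(Splus [c]).1, (Splus [c]).2⟩ := by decide +revert
    have hcount (l : Fin 4) : (c :: w).count l = [c].count l + w.count l :=
      List.count_append (l₁ := [c])
    rw [List.map_cons, List.sum_cons, ih, hletter, Zsqrtd.ext_iff]
    simp only [Splus, hcount, Zsqrtd.re_add, Zsqrtd.im_add, Nat.cast_add]
    constructor <;> ring

/-- The lattice path with steps `pf5Dir (pf5Word j)`: the value of `S⊕` on the prefix of length `n`
of the fixed point. -/
def pf5Path (n : ℕ) : GaussianInt :=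
  ∑ j ∈ Finset.range n, pf5Dir (pf5Word j)

theorem pf5Path_add (p n : ℕ) :
    pf5Path (p + n) = pf5Path p + ∑ j ∈ Finset.range n, pf5Dir (pf5Word (p + j)) :=
  Finset.sum_range_add _ _ _

theorem pf5Path_five : pf5Path 5 = ⟨1, 2⟩ := by
  decide

theorem norm_pf5Path_five : (pf5Path 5).norm = 5 := by
  decide

theorem pf5Path_five_mul_add_eq_add (p : ℕ) {k : ℕ} (hk : k ≤ 5) :
    pf5Path (5 * p + k) = pf5Path (5 * p) + pf5Dir (pf5Word p) * pf5Path k := by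
  rw [pf5Path_add, pf5Path.eq_def k, Finset.mul_sum]
  congr 1
  refine Finset.sum_congr rfl fun j hj => ?_
  rw [pf5Word_five_mul_add p ((Finset.mem_range.1 hj).trans_le hk), pf5Dir_add]

theorem pf5Path_five_mul (p : ℕ) : pf5Path (5 * p) = pf5Path 5 * pf5Path p := by
  induction p with
  | zero => simp [pf5Path]
  | succ p ih =>
    rw [mul_add_one, pf5Path_five_mul_add_eq_add p le_rfl, ih, pf5Path_add p 1,
      Finset.sum_range_one, add_zero]
    ring

theorem pf5Path_five_mul_add (p : ℕ) {k : ℕ} (hk : k ≤ 5) :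
    pf5Path (5 * p + k) = pf5Path 5 * pf5Path p + pf5Dir (pf5Word p) * pf5Path k := by
  rw [pf5Path_five_mul_add_eq_add p hk, pf5Path_five_mul]

theorem exists_mem_pf5Lang_Splus_eq {p q : ℕ} (hpq : p < q) {z : GaussianInt}
    (hz : pf5Path q = pf5Path p + z) : ∃ w ∈ pf5Lang, Splus w = (z.re, z.im) := by
  refine ⟨_, isFactor_map_range pf5Word p (Nat.sub_ne_zero_of_lt hpq), ?_⟩
  set w := (List.range (q - p)).map fun j => pf5Word (p + j) with hw
  have hsum : (w.map pf5Dir).sum = z := by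
    rw [← Nat.add_sub_cancel' hpq.le, pf5Path_add, add_right_inj] at hz
    rw [← hz, hw, List.map_map]
    rfl
  rw [← hsum, sum_map_pf5Dir]

/-- The unit edge leaving the lattice point `z` in direction `m` is horizontal if `z` is an even
lattice point and vertical if `z` is odd, as on every path from the origin whose steps alternate
between the two, starting horizontally. -/
def IsAdmissibleEdge (z : GaussianInt) (m : Fin 4) : Prop :=
  Even (z.re + z.im + (m : ℕ))

/-- When the origin is moved to the starting point of some step `a` of the path, that step or a
later one starts at `z` and has direction `m`. -/
def IsTraversedEdge (z : GaussianInt) (m : Fin 4) : Prop :=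
  ∃ p q, p ≤ q ∧ pf5Word p = 0 ∧ pf5Word q = m ∧ pf5Path q = pf5Path p + z

/-- Twice the midpoint of the unit edge leaving `z` in direction `m`; the factor two keeps it a
Gaussian integer. -/
def doubledMidpoint (z : GaussianInt) (m : Fin 4) : GaussianInt :=
  2 * z + pf5Dir m

theorem IsTraversedEdge.child {z : GaussianInt} {c : Fin 4} (h : IsTraversedEdge z c) {k : ℕ}
    (hk : k < 5) :
    IsTraversedEdge (pf5Path 5 * z + pf5Dir c * pf5Path k) (c + pf5Word k) := by
  obtain ⟨p, q, hpq, hp, rfl, hz⟩ := h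
  refine ⟨5 * p, 5 * q + k, by omega, ?_, pf5Word_five_mul_add q hk, ?_⟩
  · rw [← add_zero (5 * p), pf5Word_five_mul_add p (by norm_num), hp]
    rfl
  · rw [pf5Path_five_mul_add q hk.le, pf5Path_five_mul, hz]
    ring

theorem exists_eq_pf5Path_five_mul {w : GaussianInt} (hw : w.re + 2 * w.im ≡ 0 [ZMOD 5]) :
    ∃ z, w = pf5Path 5 * z := by
  obtain ⟨x, hx⟩ : (5 : ℤ) ∣ w.re + 2 * w.im := Int.modEq_zero_iff_dvd.1 hw
  refine ⟨⟨x, w.im - 2 * x⟩, ?_⟩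
  rw [pf5Path_five]
  ext <;> simp only [Zsqrtd.re_mul, Zsqrtd.im_mul] <;> linarith

-- The residue of `u + vi` modulo `1 + 2i` is `u + 2v` modulo 5.
theorem exists_pf5Dir_mul_pf5Path_modEq (m : Fin 4) (r : Fin 5) : ∃ k < 5, ∃ c : Fin 4,
    m = c + pf5Word k ∧
    (r : ℤ) ≡ (pf5Dir c * pf5Path k).re + 2 * (pf5Dir c * pf5Path k).im [ZMOD 5] ∧
    Even ((pf5Dir c * pf5Path k).re + (pf5Dir c * pf5Path k).im + (c : ℕ) + (m : ℕ)) := by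
  decide +revert

theorem IsAdmissibleEdge.exists_parent {z : GaussianInt} {m : Fin 4} (h : IsAdmissibleEdge z m) :
    ∃ z' c, IsAdmissibleEdge z' c ∧ ∃ k < 5,
      z = pf5Path 5 * z' + pf5Dir c * pf5Path k ∧ m = c + pf5Word k := by
  obtain ⟨r, hr⟩ : ∃ r : Fin 5, (r : ℤ) ≡ z.re + 2 * z.im [ZMOD 5] :=
    ⟨Fin.ofNat 5 ((z.re + 2 * z.im) % 5).toNat, by simp only [Int.ModEq, Fin.ofNat]; omega⟩
  obtain ⟨k, hk, c, hm, hres, hpar⟩ := exists_pf5Dir_mul_pf5Path_modEq m r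
  set d := pf5Dir c * pf5Path k
  obtain ⟨z', hz'⟩ : ∃ z', z - d = pf5Path 5 * z' := by
    apply exists_eq_pf5Path_five_mul
    simp only [Int.ModEq, Zsqrtd.re_sub, Zsqrtd.im_sub] at hr hres ⊢
    omega
  refine ⟨z', c, ?_, k, hk, sub_eq_iff_eq_add.1 hz', hm⟩
  rw [pf5Path_five] at hz'
  have hre := congrArg Zsqrtd.re hz'
  have him := congrArg Zsqrtd.im hz'
  simp only [Zsqrtd.re_sub, Zsqrtd.im_sub, Zsqrtd.re_mul, Zsqrtd.im_mul] at hre him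
  simp only [IsAdmissibleEdge, Int.even_iff] at h hpar ⊢
  omega

theorem doubledMidpoint_child (z : GaussianInt) (c : Fin 4) (k : ℕ) :
    doubledMidpoint (pf5Path 5 * z + pf5Dir c * pf5Path k) (c + pf5Word k) =
      pf5Path 5 * doubledMidpoint z c +
        pf5Dir c * (doubledMidpoint (pf5Path k) (pf5Word k) - pf5Path 5) := by
  simp only [doubledMidpoint, pf5Dir_add]
  ring

-- Five edges replace the segment from `0` to `pf5Path 5`, and the doubled midpoint of that segment
-- is again `pf5Path 5`.
theorem norm_doubledMidpoint_sub_pf5Path_five_le {k : ℕ} (hk : k < 5) :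
    (doubledMidpoint (pf5Path k) (pf5Word k) - pf5Path 5).norm ≤ 4 := by
  decide +revert

theorem zsqrtd_norm_add_add_norm_sub {d : ℤ} (z w : Zsqrtd d) :
    (z + w).norm + (z - w).norm = 2 * (z.norm + w.norm) := by
  simp only [Zsqrtd.norm_def, Zsqrtd.re_add, Zsqrtd.im_add, Zsqrtd.re_sub, Zsqrtd.im_sub]
  ring

theorem norm_doubledMidpoint_parent_lt {z z' : GaussianInt} {m c : Fin 4} {k : ℕ} (hk : k < 5)
    (hz : z = pf5Path 5 * z' + pf5Dir c * pf5Path k) (hm : m = c + pf5Word k)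
    (hnorm : 2 < (doubledMidpoint z m).norm) :
    (doubledMidpoint z' c).norm < (doubledMidpoint z m).norm := by
  obtain ⟨o, ho, heq⟩ : ∃ o : GaussianInt, o.norm ≤ 4 ∧
      doubledMidpoint z m = pf5Path 5 * doubledMidpoint z' c + pf5Dir c * o :=
    ⟨_, norm_doubledMidpoint_sub_pf5Path_five_le hk, by rw [hz, hm, doubledMidpoint_child]⟩
  have hscale : (doubledMidpoint z m - pf5Dir c * o).norm = 5 * (doubledMidpoint z' c).norm := by
    rw [heq, add_sub_cancel_right, Zsqrtd.norm_mul, norm_pf5Path_five]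
  have hoffset : (pf5Dir c * o).norm ≤ 4 := by rwa [Zsqrtd.norm_mul, norm_pf5Dir, one_mul]
  have hsum := GaussianInt.norm_nonneg (doubledMidpoint z m + pf5Dir c * o)
  linarith [zsqrtd_norm_add_add_norm_sub (doubledMidpoint z m) (pf5Dir c * o)]

theorem norm_le_one_of_norm_doubledMidpoint_le_two {z : GaussianInt} {m : Fin 4}
    (hnorm : (doubledMidpoint z m).norm ≤ 2) : z.norm ≤ 1 := by
  have hdouble : (doubledMidpoint z m - pf5Dir m).norm = 4 * z.norm := by
    rw [doubledMidpoint, add_sub_cancel_right, Zsqrtd.norm_mul]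
    rfl
  have hsum := GaussianInt.norm_nonneg (doubledMidpoint z m + pf5Dir m)
  have hparallelogram := zsqrtd_norm_add_add_norm_sub (doubledMidpoint z m) (pf5Dir m)
  rw [hdouble, norm_pf5Dir] at hparallelogram
  omega

-- These are the four edges at the origin: two leave it and two arrive there.
theorem IsAdmissibleEdge.eq_of_norm_doubledMidpoint_le_two {z : GaussianInt} {m : Fin 4}
    (h : IsAdmissibleEdge z m) (hnorm : (doubledMidpoint z m).norm ≤ 2) :
    z = 0 ∧ m = 0 ∨ z = 0 ∧ m = 2 ∨ z = ⟨0, -1⟩ ∧ m = 1 ∨ z = ⟨0, 1⟩ ∧ m = 3 := by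
  have hz := norm_le_one_of_norm_doubledMidpoint_le_two hnorm
  obtain ⟨a, b⟩ := z
  rw [Zsqrtd.norm_def] at hz
  have ha : |a| ≤ 1 := by
    rw [← sq_le_one_iff_abs_le_one]
    linarith [sq_nonneg b]
  have hb : |b| ≤ 1 := by
    rw [← sq_le_one_iff_abs_le_one]
    linarith [sq_nonneg a]
  clear hz
  obtain ⟨ha_lower, ha_upper⟩ := abs_le.1 ha
  obtain ⟨hb_lower, hb_upper⟩ := abs_le.1 hb
  clear ha hb
  unfold IsAdmissibleEdge at h
  interval_cases a <;> interval_cases b <;> decide +revert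

theorem isTraversedEdge_of_norm_doubledMidpoint_le_two {z : GaussianInt} {m : Fin 4}
    (h : IsAdmissibleEdge z m) (hnorm : (doubledMidpoint z m).norm ≤ 2) :
    IsTraversedEdge z m := by
  rcases h.eq_of_norm_doubledMidpoint_le_two hnorm with
    ⟨rfl, rfl⟩ | ⟨rfl, rfl⟩ | ⟨rfl, rfl⟩ | ⟨rfl, rfl⟩
  · exact ⟨0, 0, by decide⟩
  · exact ⟨4, 8, by decide⟩
  · exact ⟨12, 15, by decide⟩
  · exact ⟨4, 7, by decide⟩

theorem IsAdmissibleEdge.isTraversedEdge {z : GaussianInt} {m : Fin 4}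
    (h : IsAdmissibleEdge z m) : IsTraversedEdge z m := by
  induction hn : (doubledMidpoint z m).norm.toNat using Nat.strong_induction_on
    generalizing z m with
  | _ n ih =>
    subst hn
    rcases le_or_gt (doubledMidpoint z m).norm 2 with hsmall | hlarge
    · exact isTraversedEdge_of_norm_doubledMidpoint_le_two h hsmall
    · obtain ⟨z', c, h', k, hk, hz, hm⟩ := h.exists_parent
      have hlt := norm_doubledMidpoint_parent_lt hk hz hm hlarge
      rw [hz, hm]
      exact (ih _ ((Int.toNat_lt_toNat (two_pos.trans hlarge)).2 hlt) h' rfl).child hk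

theorem exists_isAdmissibleEdge_ne_zero (z : GaussianInt) : ∃ m ≠ 0, IsAdmissibleEdge z m := by
  rcases Int.even_or_odd (z.re + z.im) with heven | hodd
  · exact ⟨2, by decide, heven.add even_two⟩
  · exact ⟨1, by decide, hodd.add_odd odd_one⟩

theorem pf5_image_eq_univ :
    {v : ℤ × ℤ | ∃ w ∈ pf5Lang, Splus w = v} = Set.univ := by
  refine Set.eq_univ_of_forall fun ⟨a, b⟩ => ?_
  obtain ⟨m, hm, hedge⟩ := exists_isAdmissibleEdge_ne_zero ⟨a, b⟩
  obtain ⟨p, q, hpq, hp, hq, hz⟩ := hedge.isTraversedEdge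
  have hne : p ≠ q := by
    rintro rfl
    exact hm (hq.symm.trans hp)
  exact exists_mem_pf5Lang_Splus_eq (hpq.lt_of_ne hne) hz
end
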